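/- arXiv:1712.07102 — 3 statements merged into one kernel-verified Lean document; each statement's English description precedes it below -/
import Mathlib

section
/- Assume each component x_i ∼ Laplace(0, σ_i), i.e., x_i has density t ↦ (1/(2σ_i)) exp(−|t|/σ_i). Fix θ ∈ [0,2π) with cos θ ≠ 0, assume ∫_0^{2π} F_I(θ') cos θ' dθ' ≠ 0, and assume there exist an integrable G : ℝ^d → ℝ and Σ₀ > 0 such that (∏_{i=1}^d σ_i/π) · |S(θ, u; σ)| ≤ G(u) for all u ∈ ℝ^d whenever min_i σ_i ≥ Σ₀. Then for every w ∈ ℝ^d, |S(θ, w; σ)| / ∫_{ℝ^d} |S(θ, u; σ)| du → |F_R(w)| / ∫_{ℝ^d} |F_R(u)| du as min_i σ_i → ∞ (i.e., for every ε > 0 there exists Σ such that the ratio is within ε of the limit whenever min_i σ_i > Σ). -/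
open MeasureTheory Filter Real

/-!
Since `F_R` and the Laplace density `p` are even, all sine contributions vanish, so `f₀ = A F̂_R`
with `A = ∫ F_I cos` and `F̂_R` the cosine transform. The product formula for cosines and Fubini
turn `E[F̂_R(x) cos(w·x + θ)]` into `cos θ (p̂ ⋆ F_R)(w)`, and `p̂` is, up to the factor
`∏ π / σᵢ`, the product Cauchy density `K` rescaled by `σ`. Factors independent of `w` cancel in
the ratio, which leaves the approximate identity `K_σ ⋆ F_R → F_R`: pointwise by dominated
convergence, and for the norms `‖K_σ ⋆ F_R‖₁ → ‖F_R‖₁` because Young's inequality bounds them by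
`‖F_R‖₁`, while `min(|K_σ ⋆ F_R|, |F_R|)` is dominated by `|F_R|`.
-/

section

open scoped Convolution Topology

section EvenOdd

variable {X : Type*} [MeasurableSpace X] {μ : Measure X}

theorem integrable_mul_cos {F φ : X → ℝ} (hF : Integrable F μ) (hφ : AEStronglyMeasurable φ μ) :
    Integrable (fun x ↦ F x * cos (φ x)) μ :=
  hF.mul_bdd (c := 1) (continuous_cos.comp_aestronglyMeasurable hφ)
    (ae_of_all _ fun _ ↦ abs_cos_le_one _)

theorem integrable_mul_sin {F φ : X → ℝ} (hF : Integrable F μ) (hφ : AEStronglyMeasurable φ μ) :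
    Integrable (fun x ↦ F x * sin (φ x)) μ :=
  hF.mul_bdd (c := 1) (continuous_sin.comp_aestronglyMeasurable hφ)
    (ae_of_all _ fun _ ↦ abs_sin_le_one _)

variable [AddGroup X] [MeasurableNeg X] [μ.IsNegInvariant]

theorem integral_eq_zero_of_odd {E : Type*} [NormedAddCommGroup E] [NormedSpace ℝ E]
    {f : X → E} (hf : f.Odd) : ∫ x, f x ∂μ = 0 := by
  have h : -∫ x, f x ∂μ = ∫ x, f x ∂μ := by
    rw [← integral_neg, ← integral_neg_eq_self f μ]
    simp only [hf.eq]
  have := IsAddTorsionFree.of_isTorsionFree ℝ E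
  exact neg_eq_self.1 h

theorem integral_mul_sin_eq_zero {F φ : X → ℝ} (hF : F.Even) (hφ : φ.Odd) :
    ∫ x, F x * sin (φ x) ∂μ = 0 :=
  integral_eq_zero_of_odd fun x ↦ by rw [hF.eq, hφ.eq, sin_neg, mul_neg]

theorem integral_mul_cos_add {F φ : X → ℝ} (hF : F.Even) (hFi : Integrable F μ) (hφ : φ.Odd)
    (hφm : AEStronglyMeasurable φ μ) (t : ℝ) :
    ∫ x, F x * cos (φ x + t) ∂μ = cos t * ∫ x, F x * cos (φ x) ∂μ := by
  have expand : ∀ x, F x * cos (φ x + t) =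
      cos t * (F x * cos (φ x)) - sin t * (F x * sin (φ x)) := fun x ↦ by
    rw [cos_add]
    ring
  simp_rw [expand]
  rw [integral_sub ((integrable_mul_cos hFi hφm).const_mul _)
      ((integrable_mul_sin hFi hφm).const_mul _), integral_const_mul, integral_const_mul,
    integral_mul_sin_eq_zero hF hφ, mul_zero, sub_zero]

theorem integral_mul_cexp_eq_integral_mul_cos {F φ : X → ℝ} (hF : F.Even)
    (hFi : Integrable F μ) (hφ : φ.Odd) (hφm : AEStronglyMeasurable φ μ) :
    ∫ x, (F x : ℂ) * Complex.exp (φ x * Complex.I) ∂μ = (∫ x, F x * cos (φ x) ∂μ : ℝ) := by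
  have expand : ∀ x, (F x : ℂ) * Complex.exp (φ x * Complex.I) =
      (F x * cos (φ x) : ℝ) + (F x * sin (φ x) : ℝ) * Complex.I := fun x ↦ by
    rw [Complex.exp_mul_I]
    push_cast
    ring
  simp_rw [expand]
  rw [integral_add (integrable_mul_cos hFi hφm).ofReal
      ((integrable_mul_sin hFi hφm).ofReal.mul_const _), integral_mul_const,
    integral_complex_ofReal, integral_complex_ofReal, integral_mul_sin_eq_zero hF hφ,
    Complex.ofReal_zero, zero_mul, add_zero]

end EvenOdd

section CosTransform

variable {ι : Type*} [Fintype ι]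

/-- The cosine transform `v ↦ ∫ p(x) cos(v·x) dx`, which is the Fourier transform (characteristic
function) of `p` when `p` is even. -/
noncomputable def cosTransform (p : (ι → ℝ) → ℝ) (v : ι → ℝ) : ℝ :=
  ∫ x, p x * cos (v ⬝ᵥ x)

theorem odd_dotProduct (v : ι → ℝ) : (v ⬝ᵥ ·).Odd := dotProduct_neg v

theorem aestronglyMeasurable_dotProduct (v : ι → ℝ) {μ : Measure (ι → ℝ)} :
    AEStronglyMeasurable (v ⬝ᵥ ·) μ :=
  (continuous_const.dotProduct continuous_id).aestronglyMeasurable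

theorem even_cosTransform (p : (ι → ℝ) → ℝ) : (cosTransform p).Even := fun v ↦ by
  simp only [cosTransform, neg_dotProduct, cos_neg]

theorem even_prod_apply {p : ι → ℝ → ℝ} (hp : ∀ i, (p i).Even) :
    (fun x : ι → ℝ ↦ ∏ i, p i (x i)).Even := fun x ↦ by
  simp only [Pi.neg_apply, (hp _).eq]

theorem cosTransform_prod {p : ι → ℝ → ℝ} (hp : ∀ i, (p i).Even) (hpi : ∀ i, Integrable (p i))
    (v : ι → ℝ) :
    cosTransform (fun x ↦ ∏ i, p i (x i)) v = ∏ i, ∫ x, p i x * cos (v i * x) := by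
  apply Complex.ofReal_injective
  calc ((cosTransform (fun x ↦ ∏ i, p i (x i)) v : ℝ) : ℂ)
      = ∫ x : ι → ℝ, ((∏ i, p i (x i) : ℝ) : ℂ) * Complex.exp ((v ⬝ᵥ x : ℝ) * Complex.I) :=
        (integral_mul_cexp_eq_integral_mul_cos (even_prod_apply hp) (.fintype_prod hpi)
          (odd_dotProduct v) (aestronglyMeasurable_dotProduct v)).symm
    _ = ∫ x : ι → ℝ, ∏ i, (p i (x i) : ℂ) * Complex.exp ((v i * x i : ℝ) * Complex.I) := by
        simp only [Finset.prod_mul_distrib, ← Complex.exp_sum, ← Finset.sum_mul,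
          ← Complex.ofReal_sum, ← Complex.ofReal_prod, dotProduct]
    _ = ∏ i, ∫ x : ℝ, (p i x : ℂ) * Complex.exp ((v i * x : ℝ) * Complex.I) :=
        integral_fintype_prod_volume_eq_prod
          fun i x ↦ (p i x : ℂ) * Complex.exp ((v i * x : ℝ) * Complex.I)
    _ = ((∏ i, ∫ x, p i x * cos (v i * x) : ℝ) : ℂ) := by
        rw [Complex.ofReal_prod]
        exact Finset.prod_congr rfl fun i _ ↦
          integral_mul_cexp_eq_integral_mul_cos (hp i) (hpi i) (fun x ↦ mul_neg _ x) (by fun_prop)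

theorem cosTransform_mul_cos {F : (ι → ℝ) → ℝ} (hF : F.Even) (hFi : Integrable F)
    (w x : ι → ℝ) :
    cosTransform F x * cos (w ⬝ᵥ x) = ∫ u, F u * cos ((w - u) ⬝ᵥ x) := by
  have phase : ∀ u, cos ((w - u) ⬝ᵥ x) = cos (x ⬝ᵥ u + -(w ⬝ᵥ x)) := fun u ↦ by
    rw [sub_dotProduct, dotProduct_comm u, ← cos_neg]
    ring_nf
  simp_rw [phase]
  rw [integral_mul_cos_add hF hFi (odd_dotProduct x) (aestronglyMeasurable_dotProduct x), cos_neg,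
    mul_comm, cosTransform]

theorem integrable_prod_mul_cos {p F : (ι → ℝ) → ℝ} (hp : Integrable p) (hF : Integrable F)
    {φ : (ι → ℝ) × (ι → ℝ) → ℝ} (hφ : Continuous φ) :
    Integrable (fun z : (ι → ℝ) × (ι → ℝ) ↦ p z.1 * (F z.2 * cos (φ z))) := by
  simp only [← mul_assoc]
  exact integrable_mul_cos (hp.mul_prod hF) hφ.aestronglyMeasurable

theorem integrable_mul_cosTransform {p F : (ι → ℝ) → ℝ} (hp : Integrable p) (hF : Integrable F) :
    Integrable (fun x ↦ p x * cosTransform F x) := by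
  simp only [cosTransform, ← integral_const_mul]
  exact (integrable_prod_mul_cos hp hF
    (continuous_fst.dotProduct continuous_snd)).integral_prod_left

theorem integral_mul_cosTransform_mul_cos_add {p F : (ι → ℝ) → ℝ} (hp : p.Even)
    (hpi : Integrable p) (hF : F.Even) (hFi : Integrable F) (w : ι → ℝ) (θ : ℝ) :
    ∫ x, p x * (cosTransform F x * cos (w ⬝ᵥ x + θ)) = cos θ * (cosTransform p ⋆ F) w :=
  calc ∫ x, p x * (cosTransform F x * cos (w ⬝ᵥ x + θ))
      = cos θ * ∫ x, p x * cosTransform F x * cos (w ⬝ᵥ x) := by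
        simp only [← mul_assoc]
        exact integral_mul_cos_add (hp.mul_even (even_cosTransform F))
          (integrable_mul_cosTransform hpi hFi) (odd_dotProduct w)
          (aestronglyMeasurable_dotProduct w) θ
    _ = cos θ * ∫ x, ∫ u, p x * (F u * cos ((w - u) ⬝ᵥ x)) := by
        simp only [mul_assoc, cosTransform_mul_cos hF hFi, integral_const_mul]
    _ = cos θ * ∫ u, ∫ x, p x * (F u * cos ((w - u) ⬝ᵥ x)) := by
        rw [integral_integral_swap (integrable_prod_mul_cos hpi hFi
          ((continuous_const.sub continuous_snd).dotProduct continuous_fst))]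
    _ = cos θ * (cosTransform p ⋆ F) w := by
        simp only [convolution_lsmul_swap, cosTransform, smul_eq_mul, ← integral_mul_const,
          mul_assoc, mul_comm (F _)]

end CosTransform

section NormConvergence

theorem tendsto_integral_norm_of_integral_norm_le {α X E : Type*} [MeasurableSpace X]
    {μ : Measure X} [NormedAddCommGroup E] {l : Filter α} [l.IsCountablyGenerated]
    {f : α → X → E} {g : X → E} (hf : ∀ᶠ a in l, Integrable (f a) μ) (hg : Integrable g μ)
    (hle : ∀ᶠ a in l, ∫ x, ‖f a x‖ ∂μ ≤ ∫ x, ‖g x‖ ∂μ)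
    (hlim : ∀ᵐ x ∂μ, Tendsto (fun a ↦ f a x) l (𝓝 (g x))) :
    Tendsto (fun a ↦ ∫ x, ‖f a x‖ ∂μ) l (𝓝 (∫ x, ‖g x‖ ∂μ)) := by
  have tendsto_min : Tendsto (fun a ↦ ∫ x, min ‖f a x‖ ‖g x‖ ∂μ) l (𝓝 (∫ x, ‖g x‖ ∂μ)) := by
    refine tendsto_integral_filter_of_dominated_convergence (fun x ↦ ‖g x‖) ?_ ?_ hg.norm ?_
    · filter_upwards [hf] with a ha using (ha.norm.inf hg.norm).aestronglyMeasurable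
    · refine .of_forall fun a ↦ ae_of_all _ fun x ↦ ?_
      rw [norm_of_nonneg (le_min (norm_nonneg _) (norm_nonneg _))]
      exact min_le_right _ _
    · filter_upwards [hlim] with x hx
      simpa only [min_self] using hx.norm.min (tendsto_const_nhds (x := ‖g x‖))
  refine tendsto_of_tendsto_of_tendsto_of_le_of_le' tendsto_min tendsto_const_nhds ?_ hle
  filter_upwards [hf] with a ha
  exact integral_mono (ha.norm.inf hg.norm) ha.norm fun x ↦ min_le_left _ _

theorem integral_norm_convolution_le {G E : Type*} [MeasurableSpace G] [AddGroup G]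
    [MeasurableAdd₂ G] [MeasurableNeg G] {μ : Measure G} [SFinite μ] [μ.IsAddRightInvariant]
    [NormedAddCommGroup E] [NormedSpace ℝ E] {f : G → ℝ} {g : G → E}
    (hf : Integrable f μ) (hg : Integrable g μ) :
    ∫ x, ‖(f ⋆[.lsmul ℝ ℝ, μ] g : G → E) x‖ ∂μ ≤ (∫ x, ‖f x‖ ∂μ) * ∫ x, ‖g x‖ ∂μ :=
  calc ∫ x, ‖(f ⋆[.lsmul ℝ ℝ, μ] g : G → E) x‖ ∂μ
      ≤ ∫ x, ((‖f ·‖) ⋆[.lsmul ℝ ℝ, μ] (‖g ·‖) : G → ℝ) x ∂μ := by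
        refine integral_mono (hf.integrable_convolution _ hg).norm
          (hf.norm.integrable_convolution _ hg.norm) fun x ↦ ?_
        simpa only [convolution_lsmul, norm_smul, smul_eq_mul] using
          norm_integral_le_integral_norm fun t ↦ f t • g (x - t)
    _ = (∫ x, ‖f x‖ ∂μ) * ∫ x, ‖g x‖ ∂μ :=
        integral_convolution (.lsmul ℝ ℝ) hf.norm hg.norm

end NormConvergence

section ScaleLimit

variable {ι : Type*} [Finite ι]

theorem eventually_pi_atTop_pos : ∀ᶠ σ : ι → ℝ in Filter.pi fun _ ↦ atTop, ∀ i, 0 < σ i :=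
  eventually_pi fun _ ↦ eventually_gt_atTop 0

theorem exists_forall_lt_of_eventually_pi_atTop {P : (ι → ℝ) → Prop}
    (h : ∀ᶠ σ in Filter.pi fun _ ↦ atTop, P σ) : ∃ T, ∀ σ : ι → ℝ, (∀ i, T < σ i) → P σ := by
  obtain ⟨⟨s, a⟩, -, hP⟩ := (hasBasis_pi fun _ : ι ↦ atTop_basis_Ioi (α := ℝ)).eventually_iff.1 h
  obtain ⟨T, hT⟩ := (Set.finite_range a).bddAbove
  exact ⟨T, fun σ hσ ↦ hP fun i _ ↦ (hT (Set.mem_range_self i)).trans_lt (hσ i)⟩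

end ScaleLimit

section Dilation

theorem measurableEmbedding_pi_mul {ι : Type*} [Countable ι] {σ : ι → ℝ} (hσ : ∀ i, σ i ≠ 0) :
    MeasurableEmbedding (σ * · : (ι → ℝ) → ι → ℝ) :=
  (Homeomorph.piCongrRight fun i ↦ Homeomorph.mulLeft₀ (σ i) (hσ i)).measurableEmbedding

variable {ι E : Type*} [Fintype ι] [NormedAddCommGroup E] {σ : ι → ℝ}

theorem map_pi_mul_volume (hσ : ∀ i, σ i ≠ 0) :
    (volume : Measure (ι → ℝ)).map (σ * ·) = ENNReal.ofReal |(∏ i, σ i)⁻¹| • volume := by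
  classical
  have hdet : (Matrix.diagonal σ).det ≠ 0 := by
    rw [Matrix.det_diagonal]
    exact Finset.prod_ne_zero_iff.2 fun i _ ↦ hσ i
  have hdiag : (σ * ·) = Matrix.toLin' (Matrix.diagonal σ) := by
    ext y i
    simp [Matrix.mulVec_diagonal]
  rw [hdiag, map_matrix_volume_pi_eq_smul_volume_pi hdet, Matrix.det_diagonal]

theorem integrable_comp_pi_mul (hσ : ∀ i, σ i ≠ 0) {g : (ι → ℝ) → E} (hg : Integrable g) :
    Integrable (fun y ↦ g (σ * y)) := by
  refine ((measurableEmbedding_pi_mul hσ).integrable_map_iff (g := g)).1 ?_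
  rw [map_pi_mul_volume hσ]
  exact hg.smul_measure ENNReal.ofReal_ne_top

theorem integral_comp_pi_mul [NormedSpace ℝ E] (hσ : ∀ i, σ i ≠ 0) (g : (ι → ℝ) → E) :
    ∫ y, g (σ * y) = |(∏ i, σ i)⁻¹| • ∫ y, g y := by
  rw [← (measurableEmbedding_pi_mul hσ).integral_map g, map_pi_mul_volume hσ,
    integral_smul_measure, ENNReal.toReal_ofReal (abs_nonneg _)]

/-- The anisotropic rescaling `K_σ(v) = (∏ σᵢ) K(σ₁v₁, …, σ_d v_d)` of a kernel `K`, with the same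
integral as `K`; `K_σ` concentrates at the origin as all `σᵢ` tend to infinity. -/
noncomputable def dilatedKernel (K : (ι → ℝ) → ℝ) (σ v : ι → ℝ) : ℝ :=
  (∏ i, σ i) * K (σ * v)

variable {K : (ι → ℝ) → ℝ}

theorem integrable_dilatedKernel (hK : Integrable K) (hσ : ∀ i, 0 < σ i) :
    Integrable (dilatedKernel K σ) :=
  (integrable_comp_pi_mul (fun i ↦ (hσ i).ne') hK).const_mul _

variable [NormedSpace ℝ E]

theorem integral_prod_smul_comp_pi_mul (hσ : ∀ i, 0 < σ i) (g : (ι → ℝ) → E) :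
    ∫ y, (∏ i, σ i) • g (σ * y) = ∫ y, g y := by
  have hprod : 0 < ∏ i, σ i := Finset.prod_pos fun i _ ↦ hσ i
  rw [integral_smul, integral_comp_pi_mul (fun i ↦ (hσ i).ne'), abs_of_pos (inv_pos.2 hprod),
    smul_inv_smul₀ hprod.ne']

theorem integral_norm_dilatedKernel (hσ : ∀ i, 0 < σ i) :
    ∫ v, ‖dilatedKernel K σ v‖ = ∫ v, ‖K v‖ := by
  rw [← integral_prod_smul_comp_pi_mul hσ fun v ↦ ‖K v‖]
  simp only [dilatedKernel, norm_mul, smul_eq_mul,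
    norm_of_nonneg (Finset.prod_nonneg fun i _ ↦ (hσ i).le)]

theorem dilatedKernel_convolution (hσ : ∀ i, 0 < σ i) (F : (ι → ℝ) → E) (w : ι → ℝ) :
    (dilatedKernel K σ ⋆[.lsmul ℝ ℝ] F : (ι → ℝ) → E) w = ∫ y, K y • F (w - y / σ) := by
  rw [← integral_prod_smul_comp_pi_mul hσ, convolution_lsmul]
  have cancel : ∀ y, σ * y / σ = y := fun y ↦
    funext fun i ↦ mul_div_cancel_left₀ (y i) (hσ i).ne'
  simp only [dilatedKernel, cancel, mul_smul]

theorem tendsto_dilatedKernel_convolution [CompleteSpace E] (hK : Integrable K)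
    (hK1 : ∫ y, K y = 1) {F : (ι → ℝ) → E} (hF : StronglyMeasurable F)
    (hFb : ∃ C, ∀ u, ‖F u‖ ≤ C) {w : ι → ℝ} (hw : ContinuousAt F w) :
    Tendsto (fun σ ↦ (dilatedKernel K σ ⋆[.lsmul ℝ ℝ] F : (ι → ℝ) → E) w)
      (Filter.pi fun _ ↦ atTop) (𝓝 (F w)) := by
  obtain ⟨C, hC⟩ := hFb
  have tendsto_arg (y : ι → ℝ) :
      Tendsto (fun σ : ι → ℝ ↦ w - y / σ) (Filter.pi fun _ ↦ atTop) (𝓝 w) :=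
    tendsto_pi_nhds.2 fun i ↦ by
      simpa using ((tendsto_eval_pi (fun _ ↦ (atTop : Filter ℝ)) i).const_div_atTop
        (y i)).const_sub (w i)
  have tendsto_integral : Tendsto (fun σ : ι → ℝ ↦ ∫ y, K y • F (w - y / σ))
      (Filter.pi fun _ ↦ atTop) (𝓝 (∫ y, K y • F w)) := by
    refine tendsto_integral_filter_of_dominated_convergence (fun y ↦ ‖K y‖ * C) ?_ ?_
      (hK.norm.mul_const C) ?_
    · exact .of_forall fun σ ↦ hK.aestronglyMeasurable.smul
        (hF.comp_measurable (g := fun y ↦ w - y / σ) (by fun_prop)).aestronglyMeasurable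
    · refine .of_forall fun σ ↦ ae_of_all _ fun y ↦ ?_
      rw [norm_smul]
      gcongr
      exact hC _
    · exact ae_of_all _ fun y ↦ (hw.tendsto.comp (tendsto_arg y)).const_smul (K y)
  rw [integral_smul_const, hK1, one_smul] at tendsto_integral
  refine tendsto_integral.congr' ?_
  filter_upwards [eventually_pi_atTop_pos] with σ hσ
  exact (dilatedKernel_convolution hσ F w).symm

theorem tendsto_integral_norm_dilatedKernel_convolution [CompleteSpace E] (hK : Integrable K)
    (hK0 : 0 ≤ K) (hK1 : ∫ y, K y = 1) {F : (ι → ℝ) → E} (hF : Continuous F)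
    (hFb : ∃ C, ∀ u, ‖F u‖ ≤ C) (hFi : Integrable F) :
    Tendsto (fun σ ↦ ∫ u, ‖(dilatedKernel K σ ⋆[.lsmul ℝ ℝ] F : (ι → ℝ) → E) u‖)
      (Filter.pi fun _ ↦ atTop) (𝓝 (∫ u, ‖F u‖)) := by
  refine tendsto_integral_norm_of_integral_norm_le ?_ hFi ?_ <| ae_of_all _ fun u ↦
    tendsto_dilatedKernel_convolution hK hK1 hF.stronglyMeasurable hFb hF.continuousAt
  · filter_upwards [eventually_pi_atTop_pos] with σ hσ
    exact (integrable_dilatedKernel hK hσ).integrable_convolution _ hFi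
  · filter_upwards [eventually_pi_atTop_pos] with σ hσ
    have mass_one : ∫ v, ‖dilatedKernel K σ v‖ = 1 := by
      simp only [integral_norm_dilatedKernel hσ, norm_of_nonneg (hK0 _), hK1]
    simpa only [mass_one, one_mul] using
      integral_norm_convolution_le (integrable_dilatedKernel hK hσ) hFi

end Dilation

section LaplaceCauchy

theorem integral_exp_neg_mul_cos_Ioi {a : ℝ} (ha : 0 < a) (b : ℝ) :
    ∫ x in Set.Ioi 0, exp (-a * x) * cos (b * x) = a / (a ^ 2 + b ^ 2) := by
  set z : ℂ := ⟨-a, b⟩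
  have hz : z.re < 0 := neg_lt_zero.2 ha
  have re_exp : ∀ x : ℝ, exp (-a * x) * cos (b * x) = RCLike.re (Complex.exp (z * x)) := fun x ↦ by
    simp [z, Complex.exp_re]
  simp_rw [re_exp]
  rw [integral_re (integrableOn_exp_mul_complex_Ioi hz 0), integral_exp_mul_complex_Ioi hz]
  simp [z, Complex.div_re, Complex.normSq_apply, ← sq]

/-- The density of the centred Laplace distribution with scale `s`. -/
noncomputable def laplacePDFReal (s x : ℝ) : ℝ :=
  1 / (2 * s) * exp (-|x| / s)

variable {s : ℝ}

theorem even_laplacePDFReal (s : ℝ) : (laplacePDFReal s).Even := fun x ↦ by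
  rw [laplacePDFReal, laplacePDFReal, abs_neg]

theorem integral_laplacePDFReal_mul_cos (hs : 0 < s) (v : ℝ) :
    ∫ x, laplacePDFReal s x * cos (v * x) = (1 + (s * v) ^ 2)⁻¹ := by
  have fold_abs : ∀ x, laplacePDFReal s x * cos (v * x) =
      1 / (2 * s) * (exp (-s⁻¹ * |x|) * cos (v * |x|)) := fun x ↦ by
    have hcos : cos (v * |x|) = cos (v * x) := by
      rcases abs_choice x with h | h <;> simp [h]
    rw [laplacePDFReal, hcos, mul_assoc]
    ring_nf
  simp_rw [fold_abs]
  rw [integral_const_mul, integral_comp_abs (f := fun x ↦ exp (-s⁻¹ * x) * cos (v * x)),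
    integral_exp_neg_mul_cos_Ioi (inv_pos.2 hs)]
  field_simp

theorem integrable_laplacePDFReal (hs : 0 < s) : Integrable (laplacePDFReal s) :=
  .of_integral_ne_zero <| by
    simpa using (integral_laplacePDFReal_mul_cos hs 0).trans_ne (by positivity)

variable {ι : Type*} [Fintype ι]

/-- The density of `ι`-many independent standard Cauchy variables. -/
noncomputable def cauchyKernel (y : ι → ℝ) : ℝ :=
  ∏ i, ProbabilityTheory.cauchyPDFReal 0 1 (y i)

theorem integrable_cauchyKernel : Integrable (cauchyKernel (ι := ι)) :=
  .fintype_prod fun _ ↦ ProbabilityTheory.integrable_cauchyPDFReal 0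

theorem cauchyKernel_nonneg : 0 ≤ cauchyKernel (ι := ι) := fun _ ↦
  Finset.prod_nonneg fun _ _ ↦ (ProbabilityTheory.cauchyPDF_pos 0 one_ne_zero _).le

theorem integral_cauchyKernel : ∫ y, cauchyKernel (ι := ι) y = 1 := by
  simp only [cauchyKernel]
  rw [integral_fintype_prod_volume_eq_pow,
    ProbabilityTheory.integral_cauchyPDFReal_eq_one 0 one_ne_zero, one_pow]

theorem cosTransform_prod_laplacePDFReal {σ : ι → ℝ} (hσ : ∀ i, 0 < σ i) :
    cosTransform (fun x ↦ ∏ i, laplacePDFReal (σ i) (x i)) =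
      (∏ i, π / σ i) • dilatedKernel cauchyKernel σ := by
  ext v
  rw [cosTransform_prod (fun i ↦ even_laplacePDFReal (σ i))
    (fun i ↦ integrable_laplacePDFReal (hσ i)), Pi.smul_apply, smul_eq_mul, dilatedKernel,
    cauchyKernel, ← Finset.prod_mul_distrib, ← Finset.prod_mul_distrib]
  refine Finset.prod_congr rfl fun i _ ↦ ?_
  have hi := (hσ i).ne'
  rw [integral_laplacePDFReal_mul_cos (hσ i), ProbabilityTheory.cauchyPDFReal_def']
  simp only [Pi.mul_apply, NNReal.coe_one, sub_zero, div_one, inv_one, mul_one]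
  field_simp

end LaplaceCauchy

section Score

variable {ι : Type*} [Fintype ι] {FI : ℝ → ℝ} {FR : (ι → ℝ) → ℝ}

/-- The target function `f₀` with phase spectrum `FI` and frequency spectrum `FR`. -/
noncomputable def targetFunction (FI : ℝ → ℝ) (FR : (ι → ℝ) → ℝ) (x : ι → ℝ) : ℝ :=
  ∫ t in (0 : ℝ)..(2 * π), ∫ u, FI t * FR u * cos (u ⬝ᵥ x + t)

/-- The score `E[f(x) cos(w·x + θ)]` for independent `xᵢ ∼ Laplace(0, σᵢ)`, the expectation being
written through the product density. -/
noncomputable def laplaceScore (f : (ι → ℝ) → ℝ) (θ : ℝ) (w σ : ι → ℝ) : ℝ :=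
  ∫ x, (∏ i, laplacePDFReal (σ i) (x i)) * (f x * cos (w ⬝ᵥ x + θ))

theorem targetFunction_eq_mul_cosTransform (hFRi : Integrable FR) (hFRe : FR.Even) (x : ι → ℝ) :
    targetFunction FI FR x = (∫ t in (0 : ℝ)..(2 * π), FI t * cos t) * cosTransform FR x := by
  rw [targetFunction, ← intervalIntegral.integral_mul_const]
  refine intervalIntegral.integral_congr fun t _ ↦ ?_
  simp only [mul_assoc, dotProduct_comm _ x, integral_const_mul, cosTransform,
    integral_mul_cos_add hFRe hFRi (odd_dotProduct x) (aestronglyMeasurable_dotProduct x)]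

theorem laplaceScore_targetFunction (hFRi : Integrable FR) (hFRe : FR.Even) (θ : ℝ) (w : ι → ℝ)
    {σ : ι → ℝ} (hσ : ∀ i, 0 < σ i) :
    laplaceScore (targetFunction FI FR) θ w σ =
      (∫ t in (0 : ℝ)..(2 * π), FI t * cos t) * cos θ * (∏ i, π / σ i) *
        (dilatedKernel cauchyKernel σ ⋆ FR) w := by
  have even_density : (fun x : ι → ℝ ↦ ∏ i, laplacePDFReal (σ i) (x i)).Even :=
    even_prod_apply fun i ↦ even_laplacePDFReal (σ i)
  have integrable_density : Integrable fun x : ι → ℝ ↦ ∏ i, laplacePDFReal (σ i) (x i) :=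
    .fintype_prod fun i ↦ integrable_laplacePDFReal (hσ i)
  simp only [laplaceScore, targetFunction_eq_mul_cosTransform hFRi hFRe, mul_assoc,
    mul_left_comm _ (∫ t in (0 : ℝ)..(2 * π), FI t * cos t), integral_const_mul]
  rw [integral_mul_cosTransform_mul_cos_add even_density integrable_density hFRe hFRi,
    cosTransform_prod_laplacePDFReal hσ, smul_convolution, Pi.smul_apply, smul_eq_mul]

theorem score_ratio_recovers_spectrum_laplace_general (hFRc : Continuous FR)
    (hFRb : ∃ C, ∀ u, |FR u| ≤ C) (hFRi : Integrable FR) (hFRe : FR.Even)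
    (hFRpos : 0 < ∫ u, |FR u|) {θ : ℝ} (hcosθ : cos θ ≠ 0)
    (hFIcos : (∫ t in (0 : ℝ)..(2 * π), FI t * cos t) ≠ 0) (w : ι → ℝ) :
    Tendsto (fun σ ↦ |laplaceScore (targetFunction FI FR) θ w σ| /
        ∫ u, |laplaceScore (targetFunction FI FR) θ u σ|)
      (Filter.pi fun _ ↦ atTop) (𝓝 (|FR w| / ∫ u, |FR u|)) := by
  have tendsto_num := (tendsto_dilatedKernel_convolution integrable_cauchyKernel
    integral_cauchyKernel hFRc.stronglyMeasurable hFRb (hFRc.continuousAt (x := w))).norm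
  have tendsto_denom := tendsto_integral_norm_dilatedKernel_convolution integrable_cauchyKernel
    cauchyKernel_nonneg integral_cauchyKernel hFRc hFRb hFRi
  refine (tendsto_num.div tendsto_denom hFRpos.ne').congr' ?_
  filter_upwards [eventually_pi_atTop_pos] with σ hσ
  have factor_ne_zero :
      (∫ t in (0 : ℝ)..(2 * π), FI t * cos t) * cos θ * (∏ i, π / σ i) ≠ 0 :=
    mul_ne_zero (mul_ne_zero hFIcos hcosθ)
      (Finset.prod_pos fun i _ ↦ div_pos pi_pos (hσ i)).ne'
  simp only [laplaceScore_targetFunction hFRi hFRe θ _ hσ, abs_mul _ ((_ ⋆ _) _),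
    integral_const_mul, mul_div_mul_left _ _ (abs_ne_zero.2 factor_ne_zero), Pi.div_apply,
    norm_eq_abs]

end Score

end

/-- Laplace inputs — the normalized score ratio recovers the spectrum ratio
as all the scale parameters tend to infinity. -/
theorem score_ratio_recovers_spectrum_laplace
    (d : ℕ)
    (FI : ℝ → ℝ) (hFIc : Continuous FI) (hFIb : ∃ C, ∀ t, |FI t| ≤ C)
    (hFIi : Integrable FI) (hFIsupp : Function.support FI ⊆ Set.Ico 0 (2 * π))
    (FR : (Fin d → ℝ) → ℝ) (hFRc : Continuous FR) (hFRb : ∃ C, ∀ u, |FR u| ≤ C)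
    (hFRi : Integrable FR) (hFRe : ∀ u, FR (-u) = FR u)
    (hFRpos : 0 < ∫ u, |FR u|)
    (f₀ : (Fin d → ℝ) → ℝ)
    (hf₀ : ∀ x, f₀ x = ∫ θ' in (0:ℝ)..(2 * π), ∫ w' : Fin d → ℝ,
        FI θ' * FR w' * Real.cos ((∑ i, w' i * x i) + θ'))
    (S : ℝ → (Fin d → ℝ) → (Fin d → ℝ) → ℝ)
    -- expectation over x with independent components, x_i ∼ Laplace(0, σ_i), written
    -- via the product density ∏ i, (1/(2σ_i)) exp(−|x_i|/σ_i) with respect to Lebesgue measure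
    (hS : ∀ θ w σ, S θ w σ =
      ∫ x : Fin d → ℝ,
        (∏ i, (1 / (2 * σ i)) * Real.exp (-|x i| / σ i)) *
          (f₀ x * Real.cos ((∑ i, w i * x i) + θ)))
    (θ : ℝ) (hθ : θ ∈ Set.Ico 0 (2 * π)) (hcosθ : Real.cos θ ≠ 0)
    (hFIcos : (∫ t in (0:ℝ)..(2 * π), FI t * Real.cos t) ≠ 0)
    (hdom : ∃ G : (Fin d → ℝ) → ℝ, Integrable G ∧ ∃ T₀ > (0 : ℝ),
      ∀ σ : Fin d → ℝ, (∀ i, T₀ ≤ σ i) → ∀ u : Fin d → ℝ,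
        (∏ i, σ i / π) * |S θ u σ| ≤ G u) :
    ∀ w : Fin d → ℝ, ∀ ε > (0 : ℝ), ∃ T : ℝ,
      ∀ σ : Fin d → ℝ, (∀ i, 0 < σ i) → (∀ i, T < σ i) →
        |(|S θ w σ|) / (∫ u, |S θ u σ|) - |FR w| / (∫ u, |FR u|)| < ε := by
  obtain rfl : f₀ = targetFunction FI FR := funext hf₀
  obtain rfl : S = laplaceScore (targetFunction FI FR) := by ext; exact hS ..
  exact fun w ε hε ↦ (exists_forall_lt_of_eventually_pi_atTop (Metric.tendsto_nhds.1
    (score_ratio_recovers_spectrum_laplace_general hFRc hFRb hFRi hFRe hFRpos hcosθ hFIcos w)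
    ε hε)).imp fun _ hT σ _ ↦ hT σ
end

section
/- For every fixed ω_I ∈ ℝ^q and ω_R ∈ ℝ^k: S(ω_I, ω_R; λ) / c(λ) converges, as λ → ∞, to F_R(ω_R) · ∫_{ℝ^q} F_I(ω_I') ( H_I(ω_I, ω_I') + H_I(ω_I, −ω_I') ) dν_I(ω_I'). -/
open MeasureTheory Filter Real

/-!
By Fubini, the score of `f₀` at `ω` is the spectrum `F_I ⊗ F_R` integrated against the correlation
`E[φ(x, ω) φ(x, ω')]`. Orthogonality makes this correlation a sum of two products, so the integral
factors; since `F_R` is even, the kernels `H_R(ω_R - ·)` and `H_R(ω_R + ·)` have the same integral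
against `F_R`. Hence the score is *exactly* `(F_R ⋆ H_R(·; λ))(ω_R)` times the integral of `F_I`
against `H_I(ω_I, ·) + H_I(ω_I, -·)`, and only the first factor depends on `λ`.
-/

section Score

variable {X Ω 𝕜 : Type*} [MeasurableSpace X] [MeasurableSpace Ω] [RCLike 𝕜]

/-- The function `x ↦ ∫ F(ω) φ(x, ω) dν(ω)` synthesized from the spectrum `F` by the features `φ`;
it is the paper's `f₀` when `F` is `F_I ⊗ F_R`. -/
noncomputable def synthesis (ν : Measure Ω) (φ : X → Ω → 𝕜) (F : Ω → 𝕜) (x : X) : 𝕜 :=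
  ∫ ω, F ω * φ x ω ∂ν

/-- The score `E_{x ∼ μ}[f(x) φ(x, ω)]` of `f` at the parameter `ω`, with no complex conjugate
when `𝕜 = ℂ`. -/
noncomputable def score (μ : Measure X) (φ : X → Ω → 𝕜) (f : X → 𝕜) (ω : Ω) : 𝕜 :=
  ∫ x, f x * φ x ω ∂μ

theorem score_synthesis {μ : Measure X} [SFinite μ] {ν : Measure Ω} [SFinite ν]
    {φ : X → Ω → 𝕜} {F : Ω → 𝕜} {C : ℝ} {ω : Ω}
    (hφ : AEStronglyMeasurable (Function.uncurry φ) (μ.prod ν)) (hφC : ∀ x ω, ‖φ x ω‖ ≤ C)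
    (hφω : Integrable (fun x => φ x ω) μ) (hF : Integrable F ν) :
    score μ φ (synthesis ν φ F) ω = ∫ ω', F ω' * ∫ x, φ x ω * φ x ω' ∂μ ∂ν := by
  have hint : Integrable (Function.uncurry fun x ω' => φ x ω * F ω' * φ x ω') (μ.prod ν) :=
    (hφω.mul_prod hF).mul_bdd hφ (Eventually.of_forall fun z => hφC z.1 z.2)
  calc score μ φ (synthesis ν φ F) ω
      = ∫ x, ∫ ω', φ x ω * F ω' * φ x ω' ∂ν ∂μ := by
        simp only [mul_assoc, integral_const_mul]
        exact integral_congr_ae (.of_forall fun _ => mul_comm _ _)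
    _ = ∫ ω', ∫ x, φ x ω * F ω' * φ x ω' ∂μ ∂ν := integral_integral_swap hint
    _ = ∫ ω', F ω' * ∫ x, φ x ω * φ x ω' ∂μ ∂ν := by
        simp only [← integral_const_mul, mul_left_comm, mul_assoc]

end Score

section EvenFunction

variable {G 𝕜 : Type*} [MeasurableSpace G] [AddGroup G] [MeasurableNeg G] [RCLike 𝕜]
  {ρ : Measure G} [ρ.IsNegInvariant] {F K : G → 𝕜}

theorem integrable_even_mul_comp_add (hF : F.Even) {v : G}
    (h : Integrable (fun u => F u * K (v - u)) ρ) : Integrable (fun u => F u * K (v + u)) ρ := by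
  simpa only [hF _, sub_neg_eq_add] using h.comp_neg

theorem integral_even_mul_comp_add (hF : F.Even) (v : G) :
    ∫ u, F u * K (v + u) ∂ρ = ∫ u, F u * K (v - u) ∂ρ := by
  rw [← integral_neg_eq_self]
  simp only [hF _, sub_eq_add_neg]

end EvenFunction

section Spectrum

variable {X A G 𝕜 : Type*} [MeasurableSpace X] [MeasurableSpace A] [MeasurableSpace G]
  [AddGroup G] [MeasurableNeg G] [RCLike 𝕜] {ν : Measure A} [SFinite ν]
  {ρ : Measure G} [SFinite ρ] [ρ.IsNegInvariant]

theorem integral_prod_mul_reflected_kernels {f h h' : A → 𝕜} {F K : G → 𝕜} {v : G}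
    (hf : Integrable (fun a => f a * h a) ν) (hf' : Integrable (fun a => f a * h' a) ν)
    (hF : F.Even) (hFK : Integrable (fun u => F u * K (v - u)) ρ) :
    ∫ p : A × G, f p.1 * F p.2 * (h p.1 * K (v - p.2) + h' p.1 * K (v + p.2)) ∂ν.prod ρ
      = (∫ u, F u * K (v - u) ∂ρ) * ∫ a, f a * (h a + h' a) ∂ν := by
  have hFK' := integrable_even_mul_comp_add hF hFK
  calc ∫ p : A × G, f p.1 * F p.2 * (h p.1 * K (v - p.2) + h' p.1 * K (v + p.2)) ∂ν.prod ρ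
      = ∫ p : A × G, (f p.1 * h p.1 * (F p.2 * K (v - p.2))
          + f p.1 * h' p.1 * (F p.2 * K (v + p.2))) ∂ν.prod ρ := by
        congr 1 with p
        ring
    _ = (∫ a, f a * h a ∂ν) * (∫ u, F u * K (v - u) ∂ρ)
          + (∫ a, f a * h' a ∂ν) * ∫ u, F u * K (v + u) ∂ρ := by
        rw [integral_add (hf.mul_prod hFK) (hf'.mul_prod hFK'), ← integral_prod_mul,
          ← integral_prod_mul]
    _ = (∫ u, F u * K (v - u) ∂ρ) * ∫ a, f a * (h a + h' a) ∂ν := by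
        simp only [integral_even_mul_comp_add hF, mul_add, integral_add hf hf']
        ring

theorem score_synthesis_eq_of_orthogonal {μ : Measure X} [SFinite μ] {φ : X → A × G → 𝕜}
    {FI h h' : A → 𝕜} {FR K : G → 𝕜} {C : ℝ} {ω : A × G}
    (hφ : AEStronglyMeasurable (Function.uncurry φ) (μ.prod (ν.prod ρ)))
    (hφC : ∀ x ω, ‖φ x ω‖ ≤ C) (hφω : Integrable (fun x => φ x ω) μ)
    (hFI : Integrable FI ν) (hFR : Integrable FR ρ) (hFR_even : FR.Even)
    (hh : Integrable (fun a => FI a * h a) ν) (hh' : Integrable (fun a => FI a * h' a) ν)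
    (hK : Integrable (fun u => FR u * K (ω.2 - u)) ρ)
    (horth : ∀ a u, ∫ x, φ x ω * φ x (a, u) ∂μ = h a * K (ω.2 - u) + h' a * K (ω.2 + u)) :
    score μ φ (synthesis (ν.prod ρ) φ fun p => FI p.1 * FR p.2) ω
      = (∫ u, FR u * K (ω.2 - u) ∂ρ) * ∫ a, FI a * (h a + h' a) ∂ν := by
  rw [score_synthesis hφ hφC hφω (hFI.mul_prod hFR),
    ← integral_prod_mul_reflected_kernels hh hh' hFR_even hK]
  simp only [← horth]

theorem normalized_score_tendsto_spectrum_general {ι : Type*} {L : Filter ι}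
    [Neg A] [MeasurableNeg A] [MeasurableAdd G] [ρ.IsAddLeftInvariant]
    {FI h : A → 𝕜} {FR : G → 𝕜} {CR CI C : ℝ} {ω : A × G}
    (hFI : Integrable FI ν) (hFR : Integrable FR ρ) (hFR_le : ∀ u, ‖FR u‖ ≤ CR)
    (hFR_even : FR.Even) {μ : ι → Measure X} (hμ : ∀ᶠ l in L, IsFiniteMeasure (μ l))
    {φ : X → A × G → 𝕜} (hφ : Measurable (Function.uncurry φ)) (hφC : ∀ x ω, ‖φ x ω‖ ≤ C)
    (hh : Measurable h) (hh_le : ∀ a, ‖h a‖ ≤ CI)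
    {K : ι → G → 𝕜} (hK : ∀ᶠ l in L, Integrable (K l) ρ)
    (horth : ∀ᶠ l in L, ∀ a u, ∫ x, φ x ω * φ x (a, u) ∂μ l
      = h a * K l (ω.2 - u) + h (-a) * K l (ω.2 + u))
    {c : ι → 𝕜}
    (hc : Tendsto (fun l => (∫ u, FR u * K l (ω.2 - u) ∂ρ) / c l) L (nhds (FR ω.2))) :
    Tendsto (fun l => score (μ l) φ (synthesis (ν.prod ρ) φ fun p => FI p.1 * FR p.2) ω / c l) L
      (nhds (FR ω.2 * ∫ a, FI a * (h a + h (-a)) ∂ν)) := by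
  have hFIh : Integrable (fun a => FI a * h a) ν :=
    hFI.mul_bdd hh.aestronglyMeasurable (Eventually.of_forall hh_le)
  have hFIh' : Integrable (fun a => FI a * h (-a)) ν :=
    hFI.mul_bdd (hh.comp measurable_neg).aestronglyMeasurable
      (Eventually.of_forall fun a => hh_le (-a))
  refine (hc.mul_const (∫ a, FI a * (h a + h (-a)) ∂ν)).congr' ?_
  filter_upwards [hμ, hK, horth] with l _ hKl horthl
  have hφω : Integrable (fun x => φ x ω) (μ l) :=
    .of_bound (hφ.comp measurable_prodMk_right).aestronglyMeasurable C
      (Eventually.of_forall fun x => hφC x ω)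
  have hFRK : Integrable (fun u => FR u * K l (ω.2 - u)) ρ :=
    (hKl.comp_sub_left ω.2).bdd_mul hFR.aestronglyMeasurable (Eventually.of_forall hFR_le)
  rw [score_synthesis_eq_of_orthogonal hφ.aestronglyMeasurable hφC hφω hFI hFR hFR_even
    hFIh hFIh' hFRK horthl, div_mul_eq_mul_div]

end Spectrum

/-- pointwise limit of the normalized score. -/
theorem normalized_score_tendsto_spectrum
    (q k : ℕ) (X : Type*) [MeasurableSpace X]
    (νI : Measure (Fin q → ℝ)) [IsFiniteMeasure νI]
    (FI : (Fin q → ℝ) → ℝ) (FR : (Fin k → ℝ) → ℝ)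
    (hFIc : Continuous FI) (hFIb : ∃ C, ∀ a, |FI a| ≤ C) (hFIi : Integrable FI νI)
    (hFRc : Continuous FR) (hFRb : ∃ C, ∀ u, |FR u| ≤ C) (hFRi : Integrable FR)
    (hFRe : ∀ u, FR (-u) = FR u)
    (μ : ℝ → Measure X) (hμ : ∀ l, 0 < l → IsProbabilityMeasure (μ l))
    (φ : X → (Fin q → ℝ) × (Fin k → ℝ) → ℝ)
    (hφm : Measurable (Function.uncurry φ))
    (hφb : ∀ x ω, |φ x ω| ≤ 1)
    (HI : (Fin q → ℝ) → (Fin q → ℝ) → ℝ)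
    (hHIc : Continuous (Function.uncurry HI)) (hHIb : ∃ C, ∀ a b, |HI a b| ≤ C)
    (HR : (Fin k → ℝ) → ℝ → ℝ)
    (hHRnn : ∀ u l, 0 < l → 0 ≤ HR u l)
    (hHRi : ∀ l, 0 < l → Integrable (fun u => HR u l))
    (c : ℝ → ℝ) (hc : ∀ l, c l = ∫ u, HR u l) (hcpos : ∀ l, 0 < l → 0 < c l)
    (f₀ : X → ℝ)
    (hf₀ : ∀ x, f₀ x = ∫ p : (Fin q → ℝ) × (Fin k → ℝ),
        FI p.1 * FR p.2 * φ x p ∂(νI.prod volume))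
    (S : (Fin q → ℝ) → (Fin k → ℝ) → ℝ → ℝ)
    (hS : ∀ θ w l, S θ w l = ∫ x, f₀ x * φ x (θ, w) ∂(μ l))
    (hOrth : ∀ l, 0 < l → ∀ ωI ωR ωI' ωR',
      (∫ x, φ x (ωI, ωR) * φ x (ωI', ωR') ∂(μ l))
        = HI ωI ωI' * HR (ωR - ωR') l + HI ωI (-ωI') * HR (ωR + ωR') l)
    (hApprox : ∀ g : (Fin k → ℝ) → ℝ, Continuous g → (∃ C, ∀ u, |g u| ≤ C) → ∀ v : Fin k → ℝ,
      Tendsto (fun l => (∫ u, g u * HR (v - u) l) / c l) atTop (nhds (g v))) :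
    ∀ ωI : Fin q → ℝ, ∀ ωR : Fin k → ℝ,
      Tendsto (fun l => S ωI ωR l / c l) atTop
        (nhds (FR ωR * ∫ a, FI a * (HI ωI a + HI ωI (-a)) ∂νI)) := by
  intro ωI ωR
  obtain ⟨CI, hCI⟩ := hHIb
  obtain ⟨CR, hCR⟩ := hFRb
  have hpos : ∀ᶠ l : ℝ in atTop, 0 < l := eventually_gt_atTop 0
  simp only [hS, hf₀]
  exact normalized_score_tendsto_spectrum_general (ω := (ωI, ωR)) hFIi hFRi hCR hFRe
    (hpos.mono fun l hl => have := hμ l hl; inferInstance) hφm hφb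
    hHIc.measurable.of_uncurry_left (hCI ωI) (hpos.mono hHRi)
    (hpos.mono fun l hl => hOrth l hl ωI ωR) (hApprox FR hFRc ⟨CR, hCR⟩ ωR)
end

section
/- If x_i ∼ Cauchy(0, σ_i) for each i (i.e., x_i has density t ↦ (σ_i/π)/(σ_i² + t²)), then E[cos(ωᵀx + θ) cos(ω'ᵀx + θ')] = (1/2) cos(θ + θ') ∏_{i=1}^d exp(−σ_i |ω_i + ω_i'|) + (1/2) cos(θ − θ') ∏_{i=1}^d exp(−σ_i |ω_i − ω_i'|). -/
open MeasureTheory Real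

/-!
A product of cosines is half a sum of cosines of `⟪x, ω ± ω'⟫ + (θ ± θ')`, so its expectation is
determined by the characteristic function of `x`, which factors over independent components. For
the Cauchy law that function is `exp (-γ |t|)`: the Fourier transform of the two-sided exponential
`exp (-2πγ |·|)` is elementary and equals the Cauchy density, and Fourier inversion recovers the
exponential.
-/

open ProbabilityTheory
open scoped FourierTransform NNReal RealInnerProductSpace

section TwoSidedExponential

variable {b : ℂ}

lemma integrable_cexp_neg_mul_abs (hb : 0 < b.re) :
    Integrable fun t : ℝ ↦ Complex.exp (-b * |t|) := by
  rw [← integrableOn_univ, ← Set.Iic_union_Ioi (a := (0 : ℝ))]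
  refine IntegrableOn.union ?_ ?_
  · refine (integrableOn_exp_mul_complex_Iic hb 0).congr_fun (fun t ht ↦ ?_) measurableSet_Iic
    simp [abs_of_nonpos (Set.mem_Iic.mp ht)]
  · refine (integrableOn_exp_mul_complex_Ioi (a := -b) (by simpa using hb) 0).congr_fun
      (fun t ht ↦ ?_) measurableSet_Ioi
    simp [abs_of_pos (Set.mem_Ioi.mp ht)]

lemma fourierChar_neg_mul_smul_cexp (t w : ℝ) (z : ℂ) :
    𝐞 (-(t * w)) • Complex.exp z = Complex.exp (z - 2 * π * w * Complex.I * t) := by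
  rw [Circle.smul_def, Real.fourierChar_apply, smul_eq_mul, ← Complex.exp_add]
  push_cast
  ring_nf

lemma fourier_cexp_neg_mul_abs (hb : 0 < b.re) (w : ℝ) :
    𝓕 (fun t : ℝ ↦ Complex.exp (-b * |t|)) w = 2 * b / (b ^ 2 + (2 * π * w) ^ 2) := by
  set c : ℂ := 2 * π * w * Complex.I with hc
  have hc_re : c.re = 0 := by simp [hc]
  have hleft_re : 0 < (b - c).re := by simpa [hc_re] using hb
  have hright_re : (-b - c).re < 0 := by simpa [hc_re] using hb
  have hleft : ∀ t ∈ Set.Iic (0 : ℝ),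
      𝐞 (-(t * w)) • Complex.exp (-b * |t|) = Complex.exp ((b - c) * t) := fun t ht ↦ by
    rw [fourierChar_neg_mul_smul_cexp, abs_of_nonpos (Set.mem_Iic.mp ht),
      Complex.ofReal_neg, neg_mul_neg, sub_mul]
  have hright : ∀ t ∈ Set.Ioi (0 : ℝ),
      𝐞 (-(t * w)) • Complex.exp (-b * |t|) = Complex.exp ((-b - c) * t) := fun t ht ↦ by
    rw [fourierChar_neg_mul_smul_cexp, abs_of_pos (Set.mem_Ioi.mp ht), sub_mul]
  have hint : Integrable fun t : ℝ ↦ 𝐞 (-(t * w)) • Complex.exp (-b * |t|) := by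
    simp_rw [mul_comm _ w]
    exact (Real.fourierIntegral_convergent_iff w).mpr (integrable_cexp_neg_mul_abs hb)
  have hleft_ne : b - c ≠ 0 := fun h ↦ by simp [h] at hleft_re
  have hright_ne : -b - c ≠ 0 := fun h ↦ by simp [h] at hright_re
  have hden : b ^ 2 + (2 * π * w) ^ 2 = -((b - c) * (-b - c)) := by
    rw [hc]
    linear_combination ((2 * π * w) ^ 2 : ℂ) * Complex.I_sq
  calc 𝓕 (fun t : ℝ ↦ Complex.exp (-b * |t|)) w
      = (∫ t : ℝ in Set.Iic 0, 𝐞 (-(t * w)) • Complex.exp (-b * |t|))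
        + ∫ t : ℝ in Set.Ioi 0, 𝐞 (-(t * w)) • Complex.exp (-b * |t|) := by
        rw [Real.fourier_real_eq,
          intervalIntegral.integral_Iic_add_Ioi hint.integrableOn hint.integrableOn]
    _ = 1 / (b - c) - 1 / (-b - c) := by
        rw [setIntegral_congr_fun measurableSet_Iic hleft,
          setIntegral_congr_fun measurableSet_Ioi hright, integral_exp_mul_complex_Iic hleft_re,
          integral_exp_mul_complex_Ioi hright_re]
        simp [neg_div, ← sub_eq_add_neg]
    _ = 2 * b / (b ^ 2 + (2 * π * w) ^ 2) := by
        rw [hden]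
        field_simp
        ring

end TwoSidedExponential

section CharFunCauchy

lemma fourier_cexp_neg_mul_abs_eq_cauchyPDFReal {γ : ℝ≥0} (hγ : γ ≠ 0) :
    𝓕 (fun t : ℝ ↦ Complex.exp (-(2 * π * γ : ℝ) * |t|))
      = fun x ↦ (cauchyPDFReal 0 γ x : ℂ) := by
  ext x
  have hden : (x : ℂ) ^ 2 + γ ^ 2 ≠ 0 := by
    exact_mod_cast (by positivity : x ^ 2 + (γ : ℝ) ^ 2 ≠ 0)
  have hpi : (π : ℂ) ≠ 0 := Complex.ofReal_ne_zero.mpr pi_ne_zero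
  have hscale : (2 * π * γ : ℂ) ^ 2 + (2 * π * x) ^ 2 = (2 * π) ^ 2 * (x ^ 2 + γ ^ 2) := by ring
  rw [fourier_cexp_neg_mul_abs (by rw [Complex.ofReal_re]; positivity), cauchyPDFReal_def,
    sub_zero]
  push_cast
  rw [hscale]
  field_simp

lemma integral_cauchyPDFReal_mul_cexp {γ : ℝ≥0} (hγ : γ ≠ 0) (t : ℝ) :
    ∫ x, cauchyPDFReal 0 γ x * Complex.exp (t * x * Complex.I) = Complex.exp (-γ * |t|) := by
  have hinversion : 𝓕⁻ (fun x ↦ (cauchyPDFReal 0 γ x : ℂ))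
      = fun t : ℝ ↦ Complex.exp (-(2 * π * γ : ℝ) * |t|) := by
    rw [← fourier_cexp_neg_mul_abs_eq_cauchyPDFReal hγ]
    refine Continuous.fourierInv_fourier_eq (by fun_prop)
      (integrable_cexp_neg_mul_abs (by rw [Complex.ofReal_re]; positivity)) ?_
    rw [fourier_cexp_neg_mul_abs_eq_cauchyPDFReal hγ]
    exact (integrable_cauchyPDFReal 0).ofReal
  have hpi : (π : ℂ) ≠ 0 := Complex.ofReal_ne_zero.mpr pi_ne_zero
  calc ∫ x, cauchyPDFReal 0 γ x * Complex.exp (t * x * Complex.I)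
      = 𝓕⁻ (fun x ↦ (cauchyPDFReal 0 γ x : ℂ)) (t / (2 * π)) := by
        rw [Real.fourierInv_eq']
        congr 1 with x
        rw [smul_eq_mul, mul_comm, RCLike.inner_apply, conj_trivial]
        congr 2
        push_cast
        field_simp
    _ = Complex.exp (-(2 * π * γ : ℝ) * |t / (2 * π)|) := congrFun hinversion _
    _ = Complex.exp (-γ * |t|) := by
        rw [abs_div, abs_of_pos two_pi_pos]
        push_cast
        field_simp

theorem charFun_cauchyMeasure (x₀ : ℝ) (γ : ℝ≥0) (t : ℝ) :
    charFun (cauchyMeasure x₀ γ) t = Complex.exp (t * x₀ * Complex.I - γ * |t|) := by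
  obtain rfl | hγ := eq_or_ne γ 0
  · simp [charFun_dirac, mul_comm]
  calc charFun (cauchyMeasure x₀ γ) t
      = ∫ x, cauchyPDFReal x₀ γ x * Complex.exp (t * x * Complex.I) := by
        rw [charFun_apply_real, cauchyMeasure_of_scale_ne_zero x₀ hγ,
          integral_withDensity_eq_integral_toReal_smul (measurable_cauchyPDF x₀ γ)
            (ae_of_all _ fun _ ↦ ENNReal.ofReal_lt_top)]
        simp [cauchyPDF, ENNReal.toReal_ofReal (cauchyPDF_pos x₀ hγ _).le]
    _ = ∫ x, cauchyPDFReal x₀ γ (x + x₀) * Complex.exp (t * (x + x₀ : ℝ) * Complex.I) :=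
        (integral_add_right_eq_self
          (fun x : ℝ ↦ cauchyPDFReal x₀ γ x * Complex.exp (t * x * Complex.I)) x₀).symm
    _ = Complex.exp (t * x₀ * Complex.I)
          * ∫ x, cauchyPDFReal 0 γ x * Complex.exp (t * x * Complex.I) := by
        rw [← integral_const_mul]
        congr 1 with x
        rw [mul_left_comm, ← Complex.exp_add]
        simp only [cauchyPDFReal_def, add_sub_cancel_right, sub_zero]
        push_cast
        ring_nf
    _ = Complex.exp (t * x₀ * Complex.I - γ * |t|) := by
        rw [integral_cauchyPDFReal_mul_cexp hγ, ← Complex.exp_add, neg_mul, ← sub_eq_add_neg]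

end CharFunCauchy

section CosineMoments

variable {E : Type*} [SeminormedAddCommGroup E] [InnerProductSpace ℝ E] [MeasurableSpace E]
  [OpensMeasurableSpace E]

lemma integrable_cos_inner_add (μ : Measure E) [IsFiniteMeasure μ] (t : E) (c : ℝ) :
    Integrable (fun x ↦ Real.cos (⟪x, t⟫ + c)) μ :=
  .of_bound (by fun_prop) 1 (ae_of_all _ fun _ ↦ abs_cos_le_one _)

theorem integral_cos_inner_add (μ : Measure E) [IsFiniteMeasure μ] (t : E) (c : ℝ) :
    ∫ x, Real.cos (⟪x, t⟫ + c) ∂μ = (Complex.exp (c * Complex.I) * charFun μ t).re := by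
  have hint : Integrable
      (fun x ↦ Complex.exp (c * Complex.I) * Complex.exp (⟪x, t⟫ * Complex.I)) μ :=
    ((BoundedContinuousFunction.innerProbChar t).integrable μ).const_mul _
  rw [charFun_apply, ← integral_const_mul, ← RCLike.re_to_complex, ← integral_re hint]
  congr 1 with x
  rw [← Complex.exp_add, ← add_mul, ← Complex.ofReal_add, RCLike.re_to_complex,
    Complex.exp_ofReal_mul_I_re, add_comm]

theorem integral_cos_inner_mul_cos_inner (μ : Measure E) [IsFiniteMeasure μ] (s t : E)
    (c c' : ℝ) :
    ∫ x, Real.cos (⟪x, s⟫ + c) * Real.cos (⟪x, t⟫ + c') ∂μ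
      = 1 / 2 * (Complex.exp ((c + c' : ℝ) * Complex.I) * charFun μ (s + t)).re
        + 1 / 2 * (Complex.exp ((c - c' : ℝ) * Complex.I) * charFun μ (s - t)).re := by
  rw [← integral_cos_inner_add, ← integral_cos_inner_add, ← integral_const_mul,
    ← integral_const_mul, ← integral_add ((integrable_cos_inner_add μ _ _).const_mul _)
      ((integrable_cos_inner_add μ _ _).const_mul _)]
  congr 1 with x
  rw [inner_add_right, inner_sub_right, add_add_add_comm, ← add_sub_add_comm,
    Real.cos_add (_ + c), Real.cos_sub (_ + c)]
  ring

end CosineMoments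

section ProductDensity

variable {ι : Type*} [Fintype ι] {X : ι → Type*} {mX : ∀ i, MeasurableSpace (X i)}
  {μ : ∀ i, Measure (X i)} [∀ i, SigmaFinite (μ i)] {f : ∀ i, X i → ℝ}

lemma pi_withDensity_ofReal (hf : ∀ i, Integrable (f i) (μ i)) (hf_nonneg : ∀ i, 0 ≤ f i) :
    Measure.pi (fun i ↦ (μ i).withDensity fun x ↦ ENNReal.ofReal (f i x))
      = (Measure.pi μ).withDensity fun x ↦ ENNReal.ofReal (∏ i, f i (x i)) := by
  have hprod_nonneg (x : ∀ i, X i) : 0 ≤ ∏ i, f i (x i) :=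
    Finset.prod_nonneg fun i _ ↦ hf_nonneg i (x i)
  refine Measure.pi_eq fun s hs ↦ ?_
  calc (Measure.pi μ).withDensity (fun x ↦ ENNReal.ofReal (∏ i, f i (x i))) (Set.univ.pi s)
      = ENNReal.ofReal (∫ x in Set.univ.pi s, ∏ i, f i (x i) ∂Measure.pi μ) := by
        rw [withDensity_apply _ (.univ_pi hs), ofReal_integral_eq_lintegral_ofReal
          (Integrable.fintype_prod_dep hf).integrableOn (ae_of_all _ hprod_nonneg)]
    _ = ∏ i, ENNReal.ofReal (∫ x in s i, f i x ∂μ i) := by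
        rw [Measure.restrict_pi_pi, integral_fintype_prod_eq_prod,
          ENNReal.ofReal_prod_of_nonneg fun i _ ↦ integral_nonneg (hf_nonneg i)]
    _ = ∏ i, (μ i).withDensity (fun x ↦ ENNReal.ofReal (f i x)) (s i) := by
        refine Finset.prod_congr rfl fun i _ ↦ ?_
        rw [withDensity_apply _ (hs i), ofReal_integral_eq_lintegral_ofReal
          (hf i).integrableOn (ae_of_all _ (hf_nonneg i))]

end ProductDensity

section IndependentCauchy

variable {ι : Type*} [Fintype ι]

lemma integral_pi_cauchyMeasure (m : ι → ℝ) {γ : ι → ℝ≥0} (hγ : ∀ i, γ i ≠ 0)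
    {F : Type*} [NormedAddCommGroup F] [NormedSpace ℝ F] (g : (ι → ℝ) → F) :
    ∫ x, g x ∂Measure.pi (fun i ↦ cauchyMeasure (m i) (γ i))
      = ∫ x, (∏ i, cauchyPDFReal (m i) (γ i) (x i)) • g x := by
  have hnonneg (i : ι) : 0 ≤ cauchyPDFReal (m i) (γ i) := fun x ↦ (cauchyPDF_pos (m i) (hγ i) x).le
  have hmeasure (i : ι) : cauchyMeasure (m i) (γ i) = volume.withDensity
      fun x ↦ ENNReal.ofReal (cauchyPDFReal (m i) (γ i) x) :=
    cauchyMeasure_of_scale_ne_zero (m i) (hγ i)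
  simp_rw [hmeasure]
  rw [pi_withDensity_ofReal (fun i ↦ integrable_cauchyPDFReal (m i)) hnonneg, ← volume_pi,
    integral_withDensity_eq_integral_toReal_smul (by fun_prop)
      (ae_of_all _ fun _ ↦ ENNReal.ofReal_lt_top)]
  congr 1 with x
  rw [ENNReal.toReal_ofReal (Finset.prod_nonneg fun i _ ↦ hnonneg i (x i))]

lemma re_cexp_mul_charFun_pi_cauchyMeasure (m : ι → ℝ) (γ : ι → ℝ≥0) (a : EuclideanSpace ℝ ι)
    (c : ℝ) :
    (Complex.exp (c * Complex.I) * charFun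
      ((Measure.pi fun i ↦ cauchyMeasure (m i) (γ i)).map (WithLp.toLp 2)) a).re
      = Real.cos (c + ∑ i, a i * m i) * ∏ i, Real.exp (-γ i * |a i|) := by
  have hexp : Complex.exp (c * Complex.I)
        * ∏ i, Complex.exp (a i * m i * Complex.I - γ i * |a i|)
      = (∏ i, Real.exp (-γ i * |a i|) : ℝ)
        * Complex.exp ((c + ∑ i, a i * m i : ℝ) * Complex.I) := by
    push_cast
    rw [← Complex.exp_sum, ← Complex.exp_sum, ← Complex.exp_add, ← Complex.exp_add]
    simp_rw [Finset.sum_sub_distrib, neg_mul, Finset.sum_neg_distrib, ← Finset.sum_mul]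
    ring_nf
  simp_rw [charFun_pi, charFun_cauchyMeasure]
  rw [hexp, Complex.re_ofReal_mul, Complex.exp_ofReal_mul_I_re, mul_comm]

theorem integral_cos_mul_cos_pi_cauchyMeasure (m : ι → ℝ) (γ : ι → ℝ≥0) (ω ω' : ι → ℝ)
    (θ θ' : ℝ) :
    ∫ x, Real.cos ((∑ i, ω i * x i) + θ) * Real.cos ((∑ i, ω' i * x i) + θ')
        ∂Measure.pi (fun i ↦ cauchyMeasure (m i) (γ i))
      = 1 / 2 * Real.cos (θ + θ' + ∑ i, (ω i + ω' i) * m i) * ∏ i, Real.exp (-γ i * |ω i + ω' i|)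
        + 1 / 2 * Real.cos (θ - θ' + ∑ i, (ω i - ω' i) * m i)
          * ∏ i, Real.exp (-γ i * |ω i - ω' i|) := by
  have h := integral_cos_inner_mul_cos_inner
    ((Measure.pi fun i ↦ cauchyMeasure (m i) (γ i)).map (WithLp.toLp 2))
    (WithLp.toLp 2 ω) (WithLp.toLp 2 ω') θ θ'
  rw [re_cexp_mul_charFun_pi_cauchyMeasure, re_cexp_mul_charFun_pi_cauchyMeasure,
    ← MeasurableEquiv.coe_toLp, integral_map_equiv] at h
  simpa [PiLp.inner_apply, mul_assoc] using h

theorem expectation_cos_cos_cauchy_general (m σ ω ω' : ι → ℝ) (hσ : ∀ i, 0 < σ i) (θ θ' : ℝ) :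
    ∫ x : ι → ℝ, (∏ i, (σ i / π) / (σ i ^ 2 + (x i - m i) ^ 2))
        * (Real.cos ((∑ i, ω i * x i) + θ) * Real.cos ((∑ i, ω' i * x i) + θ'))
      = 1 / 2 * Real.cos (θ + θ' + ∑ i, (ω i + ω' i) * m i) * ∏ i, Real.exp (-σ i * |ω i + ω' i|)
        + 1 / 2 * Real.cos (θ - θ' + ∑ i, (ω i - ω' i) * m i)
          * ∏ i, Real.exp (-σ i * |ω i - ω' i|) := by
  lift σ to ι → ℝ≥0 using fun _ ↦ (hσ _).le
  have hpdf (i : ι) (t : ℝ) :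
      (σ i / π) / ((σ i : ℝ) ^ 2 + (t - m i) ^ 2) = cauchyPDFReal (m i) (σ i) t := by
    rw [cauchyPDFReal_def, add_comm, div_eq_mul_inv, div_eq_inv_mul]
  simp_rw [hpdf, ← smul_eq_mul (∏ _, cauchyPDFReal _ _ _)]
  rw [← integral_pi_cauchyMeasure m fun _ ↦ NNReal.coe_ne_zero.mp (hσ _).ne',
    integral_cos_mul_cos_pi_cauchyMeasure]

end IndependentCauchy

/-- expected product of cosines under independent Cauchy inputs,
with the expectation written via the product density ∏ i, (σ_i/π)/(σ_i² + x_i²). -/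
theorem expectation_cos_cos_cauchy
    (d : ℕ) (σ ω ω' : Fin d → ℝ) (hσ : ∀ i, 0 < σ i) (θ θ' : ℝ) :
    (∫ x : Fin d → ℝ,
        (∏ i, (σ i / π) / ((σ i) ^ 2 + (x i) ^ 2)) *
          (Real.cos ((∑ i, ω i * x i) + θ) * Real.cos ((∑ i, ω' i * x i) + θ')))
    = (1 / 2) * Real.cos (θ + θ') * (∏ i, Real.exp (-(σ i) * |ω i + ω' i|))
      + (1 / 2) * Real.cos (θ - θ') * (∏ i, Real.exp (-(σ i) * |ω i - ω' i|)) := by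
  simpa using expectation_cos_cos_cauchy_general 0 σ ω ω' hσ θ θ'
end
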